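/- Let R be a semiartinian von Neumann regular ring with primitive factors artinian such that σ is a countable ordinal and all proper layers of R are countably generated. If a right R-module M is not weakly R-projective, then there exist α ≤ σ and a finite subset F of λ_α such that, with N_{α,F} the right ideal satisfying S_α ⊆ N_{α,F} ⊆ S_{α+1} and N_{α,F}/S_α ≅ ⊕_{β∈F} M_{n_{αβ}}(K_{αβ}) (which is an injective module), the induced map Hom_R(M, π_α↾N_{α,F}) : Hom_R(M, N_{α,F}) → Hom_R(M, N_{α,F}/S_α) is not surjective. -/

import Mathlib

set_option synthInstance.maxHeartbeats 1000000
set_option maxHeartbeats 2000000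


universe u

open Submodule Function

/-- The socle of a module: the supremum of all simple submodules. -/
def moduleSocle (R : Type*) (M : Type*) [Ring R] [AddCommGroup M] [Module R M] :
    Submodule R M :=
  sSup {W : Submodule R M | IsSimpleModule R ↥W}

/-- A ring is right semiartinian if every nonzero quotient of the right module `R_R`
has a nonzero socle. -/
def IsRightSemiartinian (R : Type u) [Ring R] : Prop :=
  ∀ I : Submodule Rᵐᵒᵖ R, I ≠ ⊤ → moduleSocle Rᵐᵒᵖ (R ⧸ I) ≠ ⊥

/-- The right socle sequence of a ring: `S_0 = 0`, `S_{α+1}/S_α = Soc(R/S_α)`,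
and unions at limits. -/
noncomputable def socleSeq (R : Type u) [Ring R] : Ordinal.{u} → Submodule Rᵐᵒᵖ R :=
  fun o => Ordinal.limitRecOn o ⊥
    (fun _ S => Submodule.comap S.mkQ (moduleSocle Rᵐᵒᵖ (R ⧸ S)))
    (fun o _ ih => ⨆ (β : Ordinal.{u}) (h : β < o), ih β h)

/-- `S_α`, viewed as a submodule of `S_{α+1}`; the kernel of the `α`-th layer
epimorphism `π_α : S_{α+1} → S_{α+1}/S_α`. -/
noncomputable def layerKer (R : Type u) [Ring R] (α : Ordinal.{u}) :
    Submodule Rᵐᵒᵖ ↥(socleSeq R (α + 1)) :=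
  (socleSeq R α).comap (socleSeq R (α + 1)).subtype

/-- The `α`-th layer `L_α = S_{α+1}/S_α` of a ring. -/
noncomputable abbrev Layer (R : Type u) [Ring R] (α : Ordinal.{u}) :=
  ↥(socleSeq R (α + 1)) ⧸ layerKer R α

/-- A module `M` is weakly `R`-projective if for each `0 < α ≤ σ`, every homomorphism
`f : M → L_α` with finitely generated image factors through the `α`-th layer
epimorphism `π_α : S_{α+1} → L_α`. -/
def WeaklyRProjective (R : Type u) [Ring R] (σ : Ordinal.{u})
    (M : Type u) [AddCommGroup M] [Module Rᵐᵒᵖ M] : Prop :=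
  ∀ α : Ordinal.{u}, 0 < α → α ≤ σ →
    ∀ f : M →ₗ[Rᵐᵒᵖ] Layer R α, (LinearMap.range f).FG →
      ∃ g : M →ₗ[Rᵐᵒᵖ] ↥(socleSeq R (α + 1)), (layerKer R α).mkQ ∘ₗ g = f

/-- A ring is von Neumann regular if each `r` admits `s` with `r * s * r = r`. -/
def IsVNRegular (R : Type u) [Ring R] : Prop :=
  ∀ r : R, ∃ s : R, r * s * r = r

/-- The annihilator of a right `R`-module, as a submodule of the right module `R_R`. -/
def rightAnnihilator (R : Type u) [Ring R] (M : Type u) [AddCommGroup M]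
    [Module Rᵐᵒᵖ M] : Submodule Rᵐᵒᵖ R where
  carrier := {r : R | ∀ m : M, MulOpposite.op r • m = 0}
  add_mem' := by
    intro a b ha hb m
    rw [MulOpposite.op_add, add_smul, ha m, hb m, add_zero]
  zero_mem' := by
    intro m
    rw [MulOpposite.op_zero, zero_smul]
  smul_mem' := by
    intro c r hr m
    have h : MulOpposite.op (c • r) = c * MulOpposite.op r := by
      rw [MulOpposite.smul_eq_mul_unop, MulOpposite.op_mul, MulOpposite.op_unop]
    rw [h, mul_smul, hr m, smul_zero]

/-- A ring has (right) primitive factors artinian if, for each right primitive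
(two-sided) ideal `P`, i.e. the annihilator of a simple right module, the factor
`R/P` is (right) artinian. -/
def HasPFA (R : Type u) [Ring R] : Prop :=
  ∀ (M : Type u) [AddCommGroup M] [Module Rᵐᵒᵖ M], IsSimpleModule Rᵐᵒᵖ M →
    IsArtinian Rᵐᵒᵖ (R ⧸ rightAnnihilator R M)

/-- A submodule `H` of a right module `M` is a homogeneous component if it is the sum of
all submodules isomorphic to some fixed simple submodule `T` of `M`. -/
def IsHomogeneousComponent (R : Type u) [Ring R] (M : Type u) [AddCommGroup M]
    [Module Rᵐᵒᵖ M] (H : Submodule Rᵐᵒᵖ M) : Prop :=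
  ∃ T : Submodule Rᵐᵒᵖ M, IsSimpleModule Rᵐᵒᵖ ↥T ∧
    H = sSup {W : Submodule Rᵐᵒᵖ M | Nonempty (↥W ≃ₗ[Rᵐᵒᵖ] ↥T)}

/-! If `f : M → L_α` has finitely generated image and does not factor through `π_α`, then its image,
viewed inside `Soc(R/S_α)`, is compact, so it lies in the sum of a finite set `F` of homogeneous
components; a lift of `f` to `N_{α,F}` would be a lift to `S_{α+1}`.

For the injectivity of `⨆ F`: a simple module `T` has an artinian, hence semisimple, factor
`R/ann T`, and so `R/ann(⨆ F)` embeds into a finite product of semisimple modules. Over a regular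
ring a homomorphism `g : I → H` from a left ideal kills `I ∩ ann H`, since `x = xsx` gives
`g x = x s (g x) = 0`. So `g` descends to a submodule of the semisimple module given by the factor
ring modulo `ann H`, and Baer's criterion applies to right `R`-modules, as left modules over the
opposite ring. -/

section Quotients

variable {A X Y M : Type*} [Ring A] [AddCommGroup X] [Module A X] [AddCommGroup Y] [Module A Y]
  [AddCommGroup M] [Module A M]

/-- The embedding `Y/f⁻¹(P) → X/P` induced by `f : Y → X`. For an inclusion `f : N → X` this
regards the subquotient `N/P` as a submodule of `X/P`. -/
def quotientComapMap (f : Y →ₗ[A] X) (P : Submodule A X) : (Y ⧸ P.comap f) →ₗ[A] X ⧸ P :=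
  mapQ (P.comap f) P f le_rfl

theorem quotientComapMap_injective (f : Y →ₗ[A] X) (P : Submodule A X) :
    Injective (quotientComapMap f P) := by
  rw [← LinearMap.ker_eq_bot, quotientComapMap, ker_mapQ, mkQ_map_self]

theorem range_quotientComapMap_subtype (P N : Submodule A X) :
    LinearMap.range (quotientComapMap N.subtype P) = N.map P.mkQ := by
  rw [quotientComapMap, range_mapQ, range_subtype]

theorem exists_comp_eq_of_range_le_range {i : Y →ₗ[A] X} (hi : Injective i) {f : M →ₗ[A] X}
    (hf : LinearMap.range f ≤ LinearMap.range i) : ∃ f' : M →ₗ[A] Y, i ∘ₗ f' = f := by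
  refine ⟨(LinearEquiv.ofInjective i hi).symm ∘ₗ f.codRestrict _ fun m => hf ⟨m, rfl⟩, ?_⟩
  ext m
  exact congrArg Subtype.val ((LinearEquiv.ofInjective i hi).apply_symm_apply _)

theorem exists_lift_of_surjective_of_range_le {P N N' : Submodule A X} (hN : N ≤ N')
    (hsurj : Surjective fun g : M →ₗ[A] N => (P.comap N.subtype).mkQ ∘ₗ g)
    (f : M →ₗ[A] N' ⧸ P.comap N'.subtype)
    (hf : LinearMap.range (quotientComapMap N'.subtype P ∘ₗ f) ≤ N.map P.mkQ) :
    ∃ g : M →ₗ[A] N', (P.comap N'.subtype).mkQ ∘ₗ g = f := by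
  rw [← range_quotientComapMap_subtype] at hf
  obtain ⟨f', hf'⟩ := exists_comp_eq_of_range_le_range (quotientComapMap_injective _ _) hf
  obtain ⟨g, hg : (P.comap N.subtype).mkQ ∘ₗ g = f'⟩ := hsurj f'
  refine ⟨inclusion hN ∘ₗ g, ?_⟩
  rw [← LinearMap.cancel_left (quotientComapMap_injective N'.subtype P)]
  calc quotientComapMap N'.subtype P ∘ₗ (P.comap N'.subtype).mkQ ∘ₗ inclusion hN ∘ₗ g
      = P.mkQ ∘ₗ N.subtype ∘ₗ g := rfl
    _ = quotientComapMap N.subtype P ∘ₗ (P.comap N.subtype).mkQ ∘ₗ g := rfl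
    _ = quotientComapMap N.subtype P ∘ₗ f' := by rw [hg]
    _ = quotientComapMap N'.subtype P ∘ₗ f := hf'

end Quotients

section Semisimple

variable {A X : Type*} [Ring A] [AddCommGroup X] [Module A X]

theorem isSemisimpleModule_quotient_of_le {K L : Submodule A X} (hKL : K ≤ L)
    [IsSemisimpleModule A (X ⧸ K)] : IsSemisimpleModule A (X ⧸ L) :=
  .of_surjective (factor hKL) (factor_surjective hKL)

theorem isSemisimpleModule_quotient_iInf {ι : Type*} [Finite ι] (K : ι → Submodule A X)
    [∀ i, IsSemisimpleModule A (X ⧸ K i)] : IsSemisimpleModule A (X ⧸ ⨅ i, K i) := by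
  have hker : LinearMap.ker (LinearMap.pi fun i => (K i).mkQ) = ⨅ i, K i := by
    simp only [LinearMap.ker_pi, ker_mkQ]
  rw [← hker]
  exact .congr (LinearMap.quotKerEquivRange _)

theorem isSemisimpleModule_quotient_annihilator_of_isArtinian [IsSemisimpleModule A X]
    [IsArtinian A (A ⧸ Module.annihilator A X)] :
    IsSemisimpleModule A (A ⧸ Module.annihilator A X) := by
  rw [IsArtinian.isSemisimpleModule_iff_jacobson, eq_bot_iff]
  intro y hy
  obtain ⟨a, rfl⟩ := Submodule.Quotient.mk_surjective _ y
  refine (Submodule.Quotient.mk_eq_zero _).2 (Module.mem_annihilator.2 fun x => ?_)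
  let evalAt : (A ⧸ Module.annihilator A X) →ₗ[A] X :=
    liftQ _ (LinearMap.toSpanSingleton A X x) fun _ hb => Module.mem_annihilator.1 hb x
  exact IsSemisimpleModule.jacobson_le_ker _ _ _ _ evalAt hy

end Semisimple

section Isotypic

variable {A X : Type*} [Ring A] [AddCommGroup X] [Module A X]

theorem annihilator_le_annihilator_isotypicComponent (S : Type*) [AddCommGroup S] [Module A S] :
    Module.annihilator A S ≤ (isotypicComponent A X S).annihilator := by
  rw [isotypicComponent, sSup_eq_iSup', annihilator_iSup]
  exact le_iInf fun ⟨_, ⟨e⟩⟩ => e.annihilator_eq.ge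

theorem sSup_isotypicComponents_eq_moduleSocle :
    sSup (isotypicComponents A X) = moduleSocle A X := by
  refine le_antisymm (sSup_le ?_) (sSup_le fun T hT => ?_)
  · rintro _ ⟨T, _, rfl⟩
    exact sSup_le_sSup fun _ ⟨e⟩ => IsSimpleModule.congr e
  · exact T.le_isotypicComponent.trans (le_sSup ⟨T, hT, rfl⟩)

theorem finset_sup_isotypicComponents_le_moduleSocle {F : Finset (Submodule A X)}
    (hF : ↑F ⊆ isotypicComponents A X) : F.sup id ≤ moduleSocle A X :=
  Finset.sup_le fun _ hH => (le_sSup (hF hH)).trans_eq sSup_isotypicComponents_eq_moduleSocle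

theorem exists_finset_isotypicComponents_of_fg {N : Submodule A X} (hN : N.FG)
    (hle : N ≤ moduleSocle A X) :
    ∃ F : Finset (Submodule A X), ↑F ⊆ isotypicComponents A X ∧ N ≤ F.sup id :=
  (CompleteLattice.isCompactElement_iff_exists_le_sSup_of_le_sSup _ _).1
    ((fg_iff_compact N).1 hN) _ (hle.trans_eq sSup_isotypicComponents_eq_moduleSocle.symm)

theorem exists_finset_isotypicComponents_not_surjective {M : Type*} [AddCommGroup M] [Module A M]
    {P N : Submodule A X} (hN : N = (moduleSocle A (X ⧸ P)).comap P.mkQ)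
    {f : M →ₗ[A] N ⧸ P.comap N.subtype} (hf : (LinearMap.range f).FG)
    (hlift : ¬ ∃ g : M →ₗ[A] N, (P.comap N.subtype).mkQ ∘ₗ g = f) :
    ∃ F : Finset (Submodule A (X ⧸ P)), ↑F ⊆ isotypicComponents A (X ⧸ P) ∧
      ¬ Surjective fun g : M →ₗ[A] (F.sup id).comap P.mkQ =>
        (P.comap ((F.sup id).comap P.mkQ).subtype).mkQ ∘ₗ g := by
  let ι := quotientComapMap N.subtype P
  have hfg : (LinearMap.range (ι ∘ₗ f)).FG := LinearMap.range_comp f ι ▸ hf.map ι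
  have hsoc : LinearMap.range (ι ∘ₗ f) ≤ moduleSocle A (X ⧸ P) :=
    calc LinearMap.range (ι ∘ₗ f) ≤ LinearMap.range ι := LinearMap.range_comp_le_range f ι
      _ = N.map P.mkQ := range_quotientComapMap_subtype P N
      _ = moduleSocle A (X ⧸ P) := by rw [hN, map_comap_eq_of_surjective P.mkQ_surjective]
  obtain ⟨F, hF, hrange⟩ := exists_finset_isotypicComponents_of_fg hfg hsoc
  have hle : (F.sup id).comap P.mkQ ≤ N :=
    hN ▸ comap_mono (finset_sup_isotypicComponents_le_moduleSocle hF)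
  refine ⟨F, hF, fun hsurj => hlift (exists_lift_of_surjective_of_range_le hle hsurj f ?_)⟩
  rwa [map_comap_eq_of_surjective P.mkQ_surjective]

end Isotypic

theorem IsVNRegular.mulOpposite {R : Type u} [Ring R] (hR : IsVNRegular R) : IsVNRegular Rᵐᵒᵖ := by
  intro r
  obtain ⟨s, hs⟩ := hR r.unop
  refine ⟨MulOpposite.op s, MulOpposite.unop_injective ?_⟩
  rw [MulOpposite.unop_mul, MulOpposite.unop_mul, MulOpposite.unop_op, ← mul_assoc, hs]

theorem IsVNRegular.baer {A : Type u} [Ring A] (hA : IsVNRegular A) {H : Type*} [AddCommGroup H]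
    [Module A H] [IsSemisimpleModule A (A ⧸ Module.annihilator A H)] : Module.Baer A H := by
  intro I g
  have hker : comap I.subtype (Module.annihilator A H) ≤ LinearMap.ker g := by
    intro x hx
    obtain ⟨s, hs⟩ := hA x
    calc g x = g ((x.1 * s) • x) := congrArg g (Subtype.ext hs.symm)
      _ = x.1 • s • g x := by rw [g.map_smul, mul_smul]
      _ = 0 := Module.mem_annihilator.1 hx _
  obtain ⟨g', hg'⟩ := IsSemisimpleModule.extension_property _
    (quotientComapMap_injective I.subtype (Module.annihilator A H)) (liftQ _ g hker)
  exact ⟨g' ∘ₗ mkQ _, fun x hx => LinearMap.congr_fun hg' (Submodule.Quotient.mk ⟨x, hx⟩)⟩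

section PrimitiveFactors

variable {R : Type u} [Ring R]

theorem comap_toSpanSingleton_rightAnnihilator (M : Type u) [AddCommGroup M] [Module Rᵐᵒᵖ M] :
    (rightAnnihilator R M).comap (LinearMap.toSpanSingleton Rᵐᵒᵖ R 1) =
      Module.annihilator Rᵐᵒᵖ M := by
  ext x
  rw [mem_comap, LinearMap.toSpanSingleton_apply, MulOpposite.smul_eq_mul_unop, one_mul,
    Module.mem_annihilator]
  rfl

theorem HasPFA.isSemisimpleModule_quotient_annihilator (hR : HasPFA R) (T : Type u)
    [AddCommGroup T] [Module Rᵐᵒᵖ T] [IsSimpleModule Rᵐᵒᵖ T] :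
    IsSemisimpleModule Rᵐᵒᵖ (Rᵐᵒᵖ ⧸ Module.annihilator Rᵐᵒᵖ T) := by
  have := hR T inferInstance
  have : IsArtinian Rᵐᵒᵖ (Rᵐᵒᵖ ⧸ Module.annihilator Rᵐᵒᵖ T) := by
    rw [← comap_toSpanSingleton_rightAnnihilator]
    exact isArtinian_of_injective _ (quotientComapMap_injective _ (rightAnnihilator R T))
  exact isSemisimpleModule_quotient_annihilator_of_isArtinian

variable {X : Type u} [AddCommGroup X] [Module Rᵐᵒᵖ X]

theorem HasPFA.isSemisimpleModule_quotient_annihilator_of_mem_isotypicComponents (hR : HasPFA R)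
    {H : Submodule Rᵐᵒᵖ X} (hH : H ∈ isotypicComponents Rᵐᵒᵖ X) :
    IsSemisimpleModule Rᵐᵒᵖ (Rᵐᵒᵖ ⧸ H.annihilator) := by
  obtain ⟨T, _, rfl⟩ := hH
  have := hR.isSemisimpleModule_quotient_annihilator T
  exact isSemisimpleModule_quotient_of_le (annihilator_le_annihilator_isotypicComponent T)

theorem HasPFA.injective_finset_sup_isotypicComponents (hpfa : HasPFA R) (hR : IsVNRegular R)
    {F : Finset (Submodule Rᵐᵒᵖ X)} (hF : ↑F ⊆ isotypicComponents Rᵐᵒᵖ X) :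
    Module.Injective Rᵐᵒᵖ (F.sup id : Submodule Rᵐᵒᵖ X) := by
  have (H : F) : IsSemisimpleModule Rᵐᵒᵖ (Rᵐᵒᵖ ⧸ H.1.annihilator) :=
    hpfa.isSemisimpleModule_quotient_annihilator_of_mem_isotypicComponents (hF H.2)
  have : IsSemisimpleModule Rᵐᵒᵖ (Rᵐᵒᵖ ⧸ (F.sup id).annihilator) := by
    rw [Finset.sup_id_eq_sSup, sSup_eq_iSup', annihilator_iSup]
    exact isSemisimpleModule_quotient_iInf fun H : F => H.1.annihilator
  exact hR.mulOpposite.baer.injective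

end PrimitiveFactors

theorem isHomogeneousComponent_iff_mem_isotypicComponents {R M : Type u} [Ring R] [AddCommGroup M]
    [Module Rᵐᵒᵖ M] {H : Submodule Rᵐᵒᵖ M} :
    IsHomogeneousComponent R M H ↔ H ∈ isotypicComponents Rᵐᵒᵖ M :=
  Iff.rfl

theorem socleSeq_add_one (R : Type u) [Ring R] (α : Ordinal.{u}) :
    socleSeq R (α + 1) = (moduleSocle Rᵐᵒᵖ (R ⧸ socleSeq R α)).comap (socleSeq R α).mkQ :=
  Ordinal.limitRecOn_add_one ..

theorem not_weaklyRProjective_witness_general (R : Type u) [Ring R] (hvnr : IsVNRegular R)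
    (hpfa : HasPFA R) (σ : Ordinal.{u})
    (_hσ : IsLeast {o : Ordinal.{u} | socleSeq R o = ⊤} (σ + 1))
    (M : Type u) [AddCommGroup M] [Module Rᵐᵒᵖ M] (hM : ¬ WeaklyRProjective R σ M) :
    ∃ α : Ordinal.{u}, α ≤ σ ∧
      ∃ F : Finset (Submodule Rᵐᵒᵖ (R ⧸ socleSeq R α)),
        (∀ H ∈ F, IsHomogeneousComponent R (R ⧸ socleSeq R α) H) ∧
        Module.Injective Rᵐᵒᵖ ↥(F.sup id) ∧
        ∃ NF : Submodule Rᵐᵒᵖ R,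
          NF = Submodule.comap (socleSeq R α).mkQ (F.sup id) ∧
          socleSeq R α ≤ NF ∧ NF ≤ socleSeq R (α + 1) ∧
          ¬ Function.Surjective
            (fun g : M →ₗ[Rᵐᵒᵖ] ↥NF =>
              ((socleSeq R α).comap NF.subtype).mkQ ∘ₗ g) := by
  simp only [WeaklyRProjective, not_forall] at hM
  obtain ⟨α, _, hα, f, hf, hlift⟩ := hM
  obtain ⟨F, hF, hsurj⟩ :=
    exists_finset_isotypicComponents_not_surjective (socleSeq_add_one R α) hf hlift
  refine ⟨α, hα, F, fun H hH => isHomogeneousComponent_iff_mem_isotypicComponents.2 (hF hH),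
    hpfa.injective_finset_sup_isotypicComponents hvnr hF, _, rfl, le_comap_mkQ _ _, ?_, hsurj⟩
  rw [socleSeq_add_one]
  exact comap_mono (finset_sup_isotypicComponents_le_moduleSocle hF)

/-- Remark 12 of the paper: over a semiartinian von Neumann regular
ring with primitive factors artinian such that `σ` is countable and all proper layers
are countably generated, if `M` is not weakly `R`-projective, then there are an
`α ≤ σ` and a finite set `F` of homogeneous components of `Soc(R/S_α)` such that, for
the right ideal `N_{α,F}` with `S_α ⊆ N_{α,F} ⊆ S_{α+1}` and `N_{α,F}/S_α = ⨆ F`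
(an injective module), the induced map
`Hom(M, N_{α,F}) → Hom(M, N_{α,F}/S_α)` is not surjective. -/
theorem not_weaklyRProjective_witness (R : Type u) [Ring R]
    (hsa : IsRightSemiartinian R) (hvnr : IsVNRegular R) (hpfa : HasPFA R)
    (σ : Ordinal.{u}) (hσ : IsLeast {o : Ordinal.{u} | socleSeq R o = ⊤} (σ + 1))
    (hσc : σ.card ≤ Cardinal.aleph0)
    (hlayers : ∀ α : Ordinal.{u}, 0 < α → α < σ →
      ∃ S : Set (Layer R α), S.Countable ∧ Submodule.span Rᵐᵒᵖ S = ⊤)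
    (M : Type u) [AddCommGroup M] [Module Rᵐᵒᵖ M]
    (hM : ¬ WeaklyRProjective R σ M) :
    ∃ α : Ordinal.{u}, α ≤ σ ∧
      ∃ F : Finset (Submodule Rᵐᵒᵖ (R ⧸ socleSeq R α)),
        (∀ H ∈ F, IsHomogeneousComponent R (R ⧸ socleSeq R α) H) ∧
        Module.Injective Rᵐᵒᵖ ↥(F.sup id) ∧
        ∃ NF : Submodule Rᵐᵒᵖ R,
          NF = Submodule.comap (socleSeq R α).mkQ (F.sup id) ∧
          socleSeq R α ≤ NF ∧ NF ≤ socleSeq R (α + 1) ∧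
          ¬ Function.Surjective
            (fun g : M →ₗ[Rᵐᵒᵖ] ↥NF =>
              ((socleSeq R α).comap NF.subtype).mkQ ∘ₗ g) :=
  not_weaklyRProjective_witness_general R hvnr hpfa σ hσ M hM
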